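/- Let G be a countably infinite group which cannot be written as the union of finitely many left translates of non-principal square-root sets together with a finite set; that is, there do not exist elements g_1,…,g_m ∈ G, elements a_1,…,a_m ∈ G with each a_i ≠ 1, and a finite set F ⊆ G with G = F ∪ g_1·√a_1 ∪ … ∪ g_m·√a_m, where √a = {x ∈ G : x² = a}. Then there exists S ⊆ G with 1 ∉ S and S = S^{-1} such that the Cayley graph of G with connection set S has the extension property; hence G embeds as a regular subgroup of the automorphism group of the random graph R. -/

import Mathlib

/-- The extension property characterising the random graph `R`. -/
def SimpleGraph.HasExtensionProperty {V : Type*} (Γ : SimpleGraph V) : Prop :=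
  ∀ U W : Finset V, Disjoint U W →
    ∃ z, z ∉ U ∧ z ∉ W ∧ (∀ u ∈ U, Γ.Adj z u) ∧ (∀ w ∈ W, ¬ Γ.Adj z w)

/-! The connection set `S` is built by forcing with finite partial information: a condition
prescribes finitely many group elements to lie inside `S` and finitely many to lie outside it. A
vertex `z` joined to all of `U` and to none of `W` needs `z * u⁻¹ ∈ S` and `z * w⁻¹ ∉ S`. Since `S`
is closed under inversion, a condition can be extended to ensure this unless `z` is one of finitely
many elements or `z * u⁻¹ = (z * w⁻¹)⁻¹` for some `u ∈ U` and `w ∈ W`. The latter equation says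
`(u⁻¹ * z) ^ 2 = u⁻¹ * w`, that is, `z` lies in a translate of a non-principal square-root set, so
the hypothesis provides a good `z`. As there are only countably many pairs `(U, W)`, a sufficiently
generic ideal of conditions handles all of them. -/

variable {G : Type*} [Group G]

section SquareRootCovers

variable (G) in
/-- The covering property excluded by Cameron and Johnson: `G` is the union of a finite set and
finitely many left translates `g i * √(a i)` of non-principal square-root sets. -/
def HasFiniteSquareRootCover : Prop :=
  ∃ (m : ℕ) (g a : Fin m → G) (F : Finset G), (∀ i, a i ≠ 1) ∧
    ∀ x : G, x ∈ F ∨ ∃ i, x ∈ (fun t => g i * t) '' {u : G | u ^ 2 = a i}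

theorem HasFiniteSquareRootCover.of_finite {ι : Type*} [Finite ι] {g a : ι → G} {F : Set G}
    (ha : ∀ i, a i ≠ 1) (hF : F.Finite)
    (hcover : ∀ x, x ∈ F ∨ ∃ i, ((g i)⁻¹ * x) ^ 2 = a i) : HasFiniteSquareRootCover G := by
  let e := (Finite.equivFin ι).symm
  refine ⟨Nat.card ι, g ∘ e, a ∘ e, hF.toFinset, fun i => ha (e i), fun x => ?_⟩
  refine (hcover x).imp hF.mem_toFinset.2 ?_
  rintro ⟨i, hi⟩
  obtain ⟨j, rfl⟩ := e.surjective i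
  exact ⟨j, (g (e j))⁻¹ * x, hi, mul_inv_cancel_left _ _⟩

open scoped Pointwise in
theorem exists_mul_inv_notMem_and_ne_inv (hG : ¬ HasFiniteSquareRootCover G) {A U W : Set G}
    (hA : A.Finite) (hU : U.Finite) (hW : W.Finite) (hUW : Disjoint U W) :
    ∃ z, (∀ v ∈ U ∪ W, z * v⁻¹ ∉ A) ∧ ∀ u ∈ U, ∀ w ∈ W, z * u⁻¹ ≠ (z * w⁻¹)⁻¹ := by
  have : Finite U := hU
  have : Finite W := hW
  by_contra! hbad
  refine hG (.of_finite (ι := U × W) (g := fun i => i.1) (a := fun i => (i.1 : G)⁻¹ * i.2)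
    (fun i hi => hUW.ne_of_mem i.1.2 i.2.2 (inv_mul_eq_one.1 hi)) (hA.mul (hU.union hW))
    fun z => or_iff_not_imp_left.2 fun hz => ?_)
  have hfresh : ∀ v ∈ U ∪ W, z * v⁻¹ ∉ A := fun v hv hzv =>
    hz ⟨z * v⁻¹, hzv, v, hv, inv_mul_cancel_right z v⟩
  obtain ⟨u, hu, w, hw, hzuw⟩ := hbad z hfresh
  refine ⟨(⟨u, hu⟩, ⟨w, hw⟩), ?_⟩
  calc (u⁻¹ * z) ^ 2 = u⁻¹ * (z * u⁻¹) * z := by simp only [pow_two, mul_assoc]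
    _ = u⁻¹ * w := by rw [hzuw]; group

end SquareRootCovers

section CayleyGraph

/-- The Cayley graph with connection set `S`, in the convention where `x` and `y` are adjacent when
`x * y⁻¹ ∈ S`, so that right translations are automorphisms. Mathlib's `SimpleGraph.mulCayley` uses
`x⁻¹ * y` instead. -/
def leftCayleyGraph (S : Set G) : SimpleGraph G :=
  SimpleGraph.fromRel fun x y => x * y⁻¹ ∈ S

variable {S : Set G}

theorem leftCayleyGraph_adj (hS : S⁻¹ = S) {x y : G} :
    (leftCayleyGraph S).Adj x y ↔ x ≠ y ∧ x * y⁻¹ ∈ S := by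
  have hswap : y * x⁻¹ ∈ S ↔ x * y⁻¹ ∈ S := by
    rw [← Set.inv_mem_inv, hS, mul_inv_rev, inv_inv]
  rw [leftCayleyGraph, SimpleGraph.fromRel_adj, hswap, or_self]

theorem leftCayleyGraph_hasExtensionProperty_iff (h1 : (1 : G) ∉ S) (hS : S⁻¹ = S) :
    (leftCayleyGraph S).HasExtensionProperty ↔ ∀ U W : Finset G, Disjoint U W →
      ∃ z ∉ W, (∀ u ∈ U, z * u⁻¹ ∈ S) ∧ ∀ w ∈ W, z * w⁻¹ ∉ S := by
  refine forall₃_congr fun U W _ => exists_congr fun z => ?_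
  simp only [leftCayleyGraph_adj hS]
  constructor
  · rintro ⟨-, hzW, hadj, hnadj⟩
    exact ⟨hzW, fun u hu => (hadj u hu).2,
      fun w hw hzw => hnadj w hw ⟨ne_of_mem_of_not_mem hw hzW |>.symm, hzw⟩⟩
  · rintro ⟨hzW, hmem, hnmem⟩
    have hzU : z ∉ U := fun hz => h1 (mul_inv_cancel z ▸ hmem z hz)
    exact ⟨hzU, hzW, fun u hu => ⟨ne_of_mem_of_not_mem hu hzU |>.symm, hmem u hu⟩,
      fun w hw hzw => hnmem w hw hzw.2⟩

end CayleyGraph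

open scoped Pointwise in
theorem disjoint_union_inv_left {α : Type*} [Inv α] {A B : Set α} (hB : B⁻¹ = B)
    (hAB : Disjoint A B) : Disjoint (A ∪ A⁻¹) B :=
  Set.disjoint_union_left.2 ⟨hAB, hB ▸ hAB.preimage Inv.inv⟩

variable (G) in
/-- A forcing condition for a connection set: finitely many elements that must belong to it and
finitely many that must not. Both sets are closed under inversion because the connection set will
be, and `1` is excluded from the start because Cayley graphs are loopless. -/
structure PartialConnectionSet where
  included : Set G
  excluded : Set G
  finite_included : included.Finite
  finite_excluded : excluded.Finite
  inv_included : included⁻¹ = included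
  inv_excluded : excluded⁻¹ = excluded
  one_mem_excluded : 1 ∈ excluded
  disjoint : Disjoint included excluded

namespace PartialConnectionSet

instance : Preorder (PartialConnectionSet G) :=
  Preorder.lift fun p => (p.included, p.excluded)

instance : Inhabited (PartialConnectionSet G) where
  default :=
    { included := ∅
      excluded := {1}
      finite_included := Set.finite_empty
      finite_excluded := Set.finite_singleton 1
      inv_included := Set.inv_empty
      inv_excluded := by rw [Set.inv_singleton, inv_one]
      one_mem_excluded := Set.mem_singleton 1
      disjoint := Set.empty_disjoint _ }

theorem exists_le_of_disjoint (p : PartialConnectionSet G) {A B : Set G} (hA : A.Finite)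
    (hB : B.Finite) (hAp : Disjoint A p.excluded) (hBp : Disjoint B p.included)
    (hAB : Disjoint A B) (hAB' : Disjoint A B⁻¹) :
    ∃ q, p ≤ q ∧ A ⊆ q.included ∧ B ⊆ q.excluded := by
  have inv_union_inv (C : Set G) : (C ∪ C⁻¹)⁻¹ = C ∪ C⁻¹ := by
    rw [Set.union_inv, inv_inv, Set.union_comm]
  let q : PartialConnectionSet G :=
    { included := p.included ∪ (A ∪ A⁻¹)
      excluded := p.excluded ∪ (B ∪ B⁻¹)
      finite_included := p.finite_included.union (hA.union hA.inv)
      finite_excluded := p.finite_excluded.union (hB.union hB.inv)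
      inv_included := by rw [Set.union_inv, p.inv_included, inv_union_inv]
      inv_excluded := by rw [Set.union_inv, p.inv_excluded, inv_union_inv]
      one_mem_excluded := Or.inl p.one_mem_excluded
      disjoint := by
        have hpB_disj := (disjoint_union_inv_left p.inv_included hBp).symm
        have hAp_disj := disjoint_union_inv_left p.inv_excluded hAp
        have hAB_disj := disjoint_union_inv_left (inv_union_inv B)
          (Set.disjoint_union_right.2 ⟨hAB, hAB'⟩)
        exact (p.disjoint.union_right hpB_disj).union_left (hAp_disj.union_right hAB_disj) }
  exact ⟨q, ⟨Set.subset_union_left, Set.subset_union_left⟩,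
    Set.subset_union_left.trans Set.subset_union_right,
    Set.subset_union_left.trans Set.subset_union_right⟩

/-- The condition `p` forces some vertex `z ∉ W` to be joined to all of `U` and to none of `W`. -/
def Realizes (p : PartialConnectionSet G) (U W : Set G) : Prop :=
  ∃ z ∉ W, (∀ u ∈ U, z * u⁻¹ ∈ p.included) ∧ ∀ w ∈ W, z * w⁻¹ ∈ p.excluded

theorem isCofinal_setOf_realizes (hG : ¬ HasFiniteSquareRootCover G) {U W : Set G}
    (hU : U.Finite) (hW : W.Finite) (hUW : Disjoint U W) :
    IsCofinal {p : PartialConnectionSet G | p.Realizes U W} := by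
  intro p
  obtain ⟨z, hfresh, hinv⟩ := exists_mul_inv_notMem_and_ne_inv hG
    (p.finite_included.union p.finite_excluded) hU hW hUW
  have hzW : z ∉ W := fun hz => hfresh z (Or.inr hz) <| Or.inr <| by
    rw [mul_inv_cancel]; exact p.one_mem_excluded
  let f (v : G) : G := z * v⁻¹
  have hU_excluded : Disjoint (f '' U) p.excluded := Set.disjoint_left.2 <| by
    rintro _ ⟨u, hu, rfl⟩ hzu
    exact hfresh u (.inl hu) (.inr hzu)
  have hW_included : Disjoint (f '' W) p.included := Set.disjoint_left.2 <| by
    rintro _ ⟨w, hw, rfl⟩ hzw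
    exact hfresh w (.inr hw) (.inl hzw)
  have hU_W : Disjoint (f '' U) (f '' W) :=
    (Set.disjoint_image_iff ((mul_right_injective z).comp inv_injective)).2 hUW
  have hU_inv_W : Disjoint (f '' U) (f '' W)⁻¹ := Set.disjoint_left.2 <| by
    rintro _ ⟨u, hu, rfl⟩ ⟨w, hw, hzw⟩
    exact hinv u hu w hw (inv_eq_iff_eq_inv.1 hzw.symm)
  obtain ⟨q, hpq, hqU, hqW⟩ := p.exists_le_of_disjoint (hU.image f) (hW.image f)
    hU_excluded hW_included hU_W hU_inv_W
  exact ⟨q, ⟨z, hzW, fun u hu => hqU ⟨u, hu, rfl⟩, fun w hw => hqW ⟨w, hw, rfl⟩⟩, hpq⟩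

theorem exists_ideal_forall_realizes [Countable G] (hG : ¬ HasFiniteSquareRootCover G) :
    ∃ I : Order.Ideal (PartialConnectionSet G),
      ∀ U W : Finset G, Disjoint U W → ∃ p ∈ I, p.Realizes U W := by
  let ι := {UW : Finset G × Finset G // Disjoint UW.1 UW.2}
  let := Encodable.ofCountable ι
  let 𝒟 (i : ι) : Order.Cofinal (PartialConnectionSet G) :=
    ⟨_, isCofinal_setOf_realizes hG i.1.1.finite_toSet i.1.2.finite_toSet
      (Finset.disjoint_coe.2 i.2)⟩
  refine ⟨Order.idealOfCofinals default 𝒟, fun U W hUW => ?_⟩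
  obtain ⟨p, hp, hpI⟩ := Order.cofinal_meets_idealOfCofinals default 𝒟 ⟨(U, W), hUW⟩
  exact ⟨p, hpI, hp⟩

/-- The connection set determined by an ideal of conditions: everything some condition includes. -/
def connectionSet (I : Order.Ideal (PartialConnectionSet G)) : Set G :=
  ⋃ p ∈ I, p.included

variable {I : Order.Ideal (PartialConnectionSet G)} {p : PartialConnectionSet G}

theorem included_subset_connectionSet (hp : p ∈ I) : p.included ⊆ connectionSet I :=
  Set.subset_biUnion_of_mem (u := included) hp

theorem disjoint_connectionSet_excluded (hp : p ∈ I) :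
    Disjoint (connectionSet I) p.excluded := by
  refine Set.disjoint_iUnion₂_left.2 fun q hq => ?_
  obtain ⟨r, -, hqr, hpr⟩ := I.directed q hq p hp
  exact r.disjoint.mono hqr.1 hpr.2

theorem one_notMem_connectionSet : (1 : G) ∉ connectionSet I := by
  obtain ⟨p, hp⟩ := I.nonempty
  exact (disjoint_connectionSet_excluded hp).notMem_of_mem_right p.one_mem_excluded

theorem inv_connectionSet : (connectionSet I)⁻¹ = connectionSet I := by
  simp only [connectionSet, Set.iUnion_inv, inv_included]

theorem Realizes.exists_connectionSet {U W : Set G} (h : p.Realizes U W) (hp : p ∈ I) :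
    ∃ z ∉ W, (∀ u ∈ U, z * u⁻¹ ∈ connectionSet I) ∧ ∀ w ∈ W, z * w⁻¹ ∉ connectionSet I := by
  obtain ⟨z, hzW, hU, hW⟩ := h
  exact ⟨z, hzW, fun u hu => included_subset_connectionSet hp (hU u hu),
    fun w hw => (disjoint_connectionSet_excluded hp).notMem_of_mem_right (hW w hw)⟩

end PartialConnectionSet

/-- **Cameron–Johnson**: if a countably infinite group `G` is not the union of finitely
many left translates of non-principal square-root sets `√a = {x : x² = a}` (`a ≠ 1`)
together with a finite set, then some Cayley graph of `G` has the extension property;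
hence `G` embeds as a regular subgroup of the automorphism group of the random graph. -/
theorem cayley_random_graph (G : Type) [Group G] [Countable G] [Infinite G]
    (h : ¬ ∃ (m : ℕ) (g a : Fin m → G) (F : Finset G), (∀ i, a i ≠ 1) ∧
      ∀ x : G, x ∈ F ∨ ∃ i, x ∈ (fun t => g i * t) '' {u : G | u ^ 2 = a i}) :
    ∃ (S : Set G) (Γ : SimpleGraph G), (1 : G) ∉ S ∧ S⁻¹ = S ∧
      (∀ x y : G, Γ.Adj x y ↔ x ≠ y ∧ x * y⁻¹ ∈ S) ∧ Γ.HasExtensionProperty := by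
  open PartialConnectionSet in
  obtain ⟨I, hI⟩ := exists_ideal_forall_realizes h
  refine ⟨connectionSet I, leftCayleyGraph (connectionSet I), one_notMem_connectionSet,
    inv_connectionSet, fun x y => leftCayleyGraph_adj inv_connectionSet, ?_⟩
  refine (leftCayleyGraph_hasExtensionProperty_iff one_notMem_connectionSet
    inv_connectionSet).2 fun U W hUW => ?_
  obtain ⟨p, hp, hpUW⟩ := hI U W hUW
  exact hpUW.exists_connectionSet hp
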